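/- Let 0 < δ < 10⁻⁵ and x > 1, D = x^{3/5 − 50δ}, and x^{2δ} ≤ N ≤ x^{1/3 + δ}. Let d = p₁⋯p_r with primes p₁ ≥ ⋯ ≥ p_r satisfying p₁⋯p_{j−1}p_j³ ≤ D for all odd j ≤ r. Then there exists a factorization d = d₁d₂d₃ into positive integers satisfying d₁ ≤ N·x^{−δ}, N²·d₂·d₃² ≤ x^{1−δ}, and N²·d₂⁵·d₃² ≤ x^{2−δ}. -/

import Mathlib

open scoped BigOperators

/-!
Pass to logarithms and measure in units where the level is `9`, writing `A ∈ [0, 6]` for the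
capacity of the first factor and `S` for the sum of the terms placed so far. It suffices to
distribute the terms over bins of sums `u`, `v`, `w` with `u ≤ A`, `v ≤ 4`, `w ≤ 6 - A` and
`v + w ≤ 9 - A`. If `S + 2b ≤ 9` and `S + 3b ≤ 10`, the next term `b` fits greedily into one of the
bins. The first condition always holds; the second one holds at even indices and for `b ≤ 1`, hence
at every index `≥ 6`. It may only fail at the indices `1`, `3` and `5`. There the distribution is
chosen by hand: for the first four terms according to the size of `A`, and for six terms exceeding
`1` by putting the third, fourth and fifth into the second bin. If `A ≥ 5`, the capacities `A` and
`9 - A` of just two bins are enough.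
-/

open Finset Real

/-- `IsThreeSplit a m u v w` says that the terms `a 0, …, a (m - 1)` can be distributed over three
bins in such a way that the sums of the bins are `u`, `v` and `w`. -/
inductive IsThreeSplit (a : ℕ → ℝ) : ℕ → ℝ → ℝ → ℝ → Prop
  | zero : IsThreeSplit a 0 0 0 0
  | fst {m : ℕ} {u v w : ℝ} : IsThreeSplit a m u v w → IsThreeSplit a (m + 1) (u + a m) v w
  | snd {m : ℕ} {u v w : ℝ} : IsThreeSplit a m u v w → IsThreeSplit a (m + 1) u (v + a m) w
  | trd {m : ℕ} {u v w : ℝ} : IsThreeSplit a m u v w → IsThreeSplit a (m + 1) u v (w + a m)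

/-- The terms `a 0, …, a (m - 1)` can be distributed over three bins such that the first one has
sum at most `A`, and the two other ones have sums at most `β` and `D - A - β` for some
`β ∈ [D / 3, 4 * D / 9]`. The range of `β` is eliminated to make all conditions linear. -/
def HasBalancedSplit (a : ℕ → ℝ) (D A : ℝ) (m : ℕ) : Prop :=
  ∃ u v w, IsThreeSplit a m u v w ∧
    u ≤ A ∧ v ≤ 4 / 9 * D ∧ w ≤ 2 / 3 * D - A ∧ v + w ≤ D - A

/-- The logarithms of the prime factors of an element of the support of the upper-bound linear sieve
of level `exp D`, in decreasing order. Indices start at `0`, so the odd positions of the sieve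
condition are the even indices here. -/
structure IsUpperSieveSeq (a : ℕ → ℝ) (D : ℝ) : Prop where
  nonneg : ∀ i, 0 ≤ a i
  antitone : Antitone a
  sum_add_three_mul_le : ∀ k, ∑ i ∈ range (2 * k), a i + 3 * a (2 * k) ≤ D

theorem IsThreeSplit.add_add_eq_sum {a : ℕ → ℝ} {m : ℕ} {u v w : ℝ}
    (h : IsThreeSplit a m u v w) : u + v + w = ∑ i ∈ range m, a i := by
  induction h with
  | zero => simp
  | fst _ ih | snd _ ih | trd _ ih => rw [sum_range_succ, ← ih]; ring

theorem HasBalancedSplit.succ {a : ℕ → ℝ} {D A : ℝ} {m : ℕ} (h : HasBalancedSplit a D A m)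
    (h₂ : ∑ i ∈ range m, a i + 2 * a m ≤ D) (h₃ : ∑ i ∈ range m, a i + 3 * a m ≤ 10 / 9 * D) :
    HasBalancedSplit a D A (m + 1) := by
  obtain ⟨u, v, w, h, hu, hv, hw, hvw⟩ := h
  rw [← h.add_add_eq_sum] at h₂ h₃
  rcases le_or_gt (u + a m) A with hu' | hu'
  · exact ⟨_, _, _, h.fst, hu', hv, hw, hvw⟩
  rcases le_or_gt (v + a m) (4 / 9 * D) with hv' | hv'
  · exact ⟨_, _, _, h.snd, hu, hv', hw, by linarith⟩
  · exact ⟨_, _, _, h.trd, hu, hv, by linarith, by linarith⟩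

namespace IsUpperSieveSeq

variable {a : ℕ → ℝ} {D A : ℝ}

theorem sum_add_two_mul_le (ha : IsUpperSieveSeq a D) (i : ℕ) :
    ∑ k ∈ range i, a k + 2 * a i ≤ D := by
  obtain ⟨k, rfl | rfl⟩ := i.even_or_odd'
  · linarith [ha.sum_add_three_mul_le k, ha.nonneg (2 * k)]
  · rw [sum_range_succ]
    linarith [ha.sum_add_three_mul_le k, ha.antitone (Nat.le_succ (2 * k))]

theorem le_div_nine (ha : IsUpperSieveSeq a D) {m : ℕ} (hm : 6 ≤ m) : a m ≤ D / 9 := by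
  have hsum : #(range 6) • a 6 ≤ ∑ i ∈ range 6, a i :=
    card_nsmul_le_sum _ _ _ fun i hi ↦ ha.antitone (mem_range.1 hi).le
  rw [card_range, nsmul_eq_mul, Nat.cast_ofNat] at hsum
  linarith [ha.sum_add_three_mul_le 3, ha.antitone hm]

theorem hasBalancedSplit_of_five_ninths_le (ha : IsUpperSieveSeq a D)
    (hA : 5 / 9 * D ≤ A) (hA' : A ≤ 2 / 3 * D) (m : ℕ) : HasBalancedSplit a D A m := by
  suffices ∃ u v, IsThreeSplit a m u v 0 ∧ u ≤ A ∧ v ≤ D - A by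
    obtain ⟨u, v, h, hu, hv⟩ := this
    exact ⟨u, v, 0, h, hu, by linarith, by linarith, by linarith⟩
  induction m with
  | zero => exact ⟨0, 0, .zero, by linarith, by linarith⟩
  | succ m ih =>
    obtain ⟨u, v, h, hu, hv⟩ := ih
    rcases le_or_gt (u + a m) A with hu' | hu'
    · exact ⟨_, _, h.fst, hu', hv⟩
    · have := ha.sum_add_two_mul_le m
      rw [← h.add_add_eq_sum] at this
      exact ⟨_, _, h.snd, hu, by linarith⟩

theorem hasBalancedSplit_four (ha : IsUpperSieveSeq a D) (hA₀ : 0 ≤ A) (hA : A ≤ 5 / 9 * D) :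
    HasBalancedSplit a D A 4 := by
  have h₀ := ha.sum_add_three_mul_le 0
  have h₂ := ha.sum_add_three_mul_le 1
  have h₃ := ha.sum_add_two_mul_le 3
  simp only [mul_zero, mul_one, sum_range_succ, sum_range_zero] at h₀ h₂ h₃
  have h₀₁ : a 1 ≤ a 0 := ha.antitone (by decide)
  have h₁₂ : a 2 ≤ a 1 := ha.antitone (by decide)
  have h₂₃ : a 3 ≤ a 2 := ha.antitone (by decide)
  rcases lt_or_ge A (a 3) with hA₃ | hA₃
  · exact ⟨_, _, _, .trd (.snd (.snd (.trd .zero))), by linarith, by linarith, by linarith,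
      by linarith⟩
  rcases lt_or_ge A (a 2) with hA₂ | hA₂
  · exact ⟨_, _, _, .fst (.snd (.snd (.trd .zero))), by linarith, by linarith, by linarith,
      by linarith⟩
  rcases lt_or_ge A (a 2 + a 3) with hA₂₃ | hA₂₃
  · exact ⟨_, _, _, .snd (.fst (.snd (.trd .zero))), by linarith, by linarith, by linarith,
      by linarith⟩
  rcases le_or_gt (a 1 + A) (2 / 3 * D) with hA₁ | hA₁
  · exact ⟨_, _, _, .fst (.fst (.trd (.snd .zero))), by linarith, by linarith, by linarith,
      by linarith⟩
  rcases le_or_gt (a 0 + a 2) A with hA₀₂ | hA₀₂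
  · exact ⟨_, _, _, .snd (.fst (.snd (.fst .zero))), by linarith, by linarith, by linarith,
      by linarith⟩
  · exact ⟨_, _, _, .trd (.snd (.snd (.fst .zero))), by linarith, by linarith, by linarith,
      by linarith⟩

theorem hasBalancedSplit_six (ha : IsUpperSieveSeq a D) (h₅ : D / 9 < a 5) (hA₀ : 0 ≤ A)
    (hA : A ≤ 5 / 9 * D) : HasBalancedSplit a D A 6 := by
  have h₄ := ha.sum_add_three_mul_le 2
  have h₅' := ha.sum_add_two_mul_le 5
  simp only [Nat.reduceMul, sum_range_succ, sum_range_zero] at h₄ h₅'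
  have h₀₁ : a 1 ≤ a 0 := ha.antitone (by decide)
  have h₁₂ : a 2 ≤ a 1 := ha.antitone (by decide)
  have h₂₃ : a 3 ≤ a 2 := ha.antitone (by decide)
  have h₃₄ : a 4 ≤ a 3 := ha.antitone (by decide)
  have h₄₅ : a 5 ≤ a 4 := ha.antitone (by decide)
  obtain ⟨u, w, h, hu, hw⟩ :
      ∃ u w, IsThreeSplit a 2 u 0 w ∧ u ≤ A ∧ (w = 0 ∨ A ≤ u + 2 * a 4) := by
    rcases le_or_gt (a 0) A with h₀ | h₀
    · rcases le_or_gt (a 0 + a 1) A with h₁ | h₁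
      · exact ⟨_, _, .fst (.fst .zero), by linarith, .inl rfl⟩
      · exact ⟨_, _, .trd (.fst .zero), by linarith, .inr (by linarith)⟩
    · rcases le_or_gt (a 1) A with h₁ | h₁
      · exact ⟨_, _, .fst (.trd .zero), by linarith, .inr (by linarith)⟩
      · exact ⟨_, _, .trd (.trd .zero), by linarith, .inr (by linarith)⟩
  have hsum := h.add_add_eq_sum
  simp only [sum_range_succ, sum_range_zero] at hsum
  rcases le_or_gt (u + a 5) A with hu' | hu'
  · have hvw : a 2 + a 3 + a 4 + w ≤ D - A := by rcases hw with rfl | hw <;> linarith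
    exact ⟨_, _, _, h.snd.snd.snd.fst, hu', by linarith, by linarith, by linarith⟩
  · exact ⟨_, _, _, h.snd.snd.snd.trd, hu, by linarith, by linarith, by linarith⟩

theorem hasBalancedSplit (ha : IsUpperSieveSeq a D) (hA₀ : 0 ≤ A) (hA : A ≤ 2 / 3 * D) {m : ℕ}
    (hm : 4 ≤ m) : HasBalancedSplit a D A m := by
  rcases le_or_gt (5 / 9 * D) A with hA' | hA'
  · exact ha.hasBalancedSplit_of_five_ninths_le hA' hA m
  induction m, hm using Nat.le_induction with
  | base => exact ha.hasBalancedSplit_four hA₀ hA'.le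
  | succ m hm ih =>
    have h₂ := ha.sum_add_two_mul_le m
    rcases le_or_gt (a m) (D / 9) with hsmall | hlarge
    · exact ih.succ h₂ (by linarith)
    have hm' : m < 6 := not_le.1 fun h ↦ hlarge.not_ge (ha.le_div_nine h)
    obtain rfl | rfl : m = 4 ∨ m = 5 := by lia
    · exact ih.succ h₂ (by linarith [ha.sum_add_three_mul_le 2])
    · exact ha.hasBalancedSplit_six hlarge hA₀ hA'.le

end IsUpperSieveSeq

theorem IsThreeSplit.exists_factorization {q : ℕ → ℕ} (hq : ∀ i, 0 < q i) {m : ℕ} {u v w : ℝ}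
    (h : IsThreeSplit (fun i ↦ log (q i)) m u v w) :
    ∃ d₁ d₂ d₃ : ℕ, d₁ * d₂ * d₃ = ∏ i ∈ range m, q i ∧
      (d₁ : ℝ) = exp u ∧ (d₂ : ℝ) = exp v ∧ (d₃ : ℝ) = exp w := by
  have exp_add_log (t : ℝ) (i : ℕ) : exp (t + log (q i)) = exp t * q i := by
    rw [exp_add, exp_log (Nat.cast_pos.2 (hq i))]
  induction h with
  | zero => exact ⟨1, 1, 1, by simp⟩
  | @fst m _ _ _ _ ih =>
    obtain ⟨d₁, d₂, d₃, hd, h₁, h₂, h₃⟩ := ih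
    refine ⟨d₁ * q m, d₂, d₃, ?_, by rw [Nat.cast_mul, exp_add_log, h₁], h₂, h₃⟩
    rw [prod_range_succ, ← hd]; ring
  | @snd m _ _ _ _ ih =>
    obtain ⟨d₁, d₂, d₃, hd, h₁, h₂, h₃⟩ := ih
    refine ⟨d₁, d₂ * q m, d₃, ?_, h₁, by rw [Nat.cast_mul, exp_add_log, h₂], h₃⟩
    rw [prod_range_succ, ← hd]; ring
  | @trd m _ _ _ _ ih =>
    obtain ⟨d₁, d₂, d₃, hd, h₁, h₂, h₃⟩ := ih
    refine ⟨d₁, d₂, d₃ * q m, ?_, h₁, h₂, by rw [Nat.cast_mul, exp_add_log, h₃]⟩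
    rw [prod_range_succ, ← hd]; ring

/-- The finite sequence `p`, continued by `1`. -/
noncomputable def padOne {r : ℕ} (p : Fin r → ℕ) : ℕ → ℕ :=
  Function.extend Fin.val p 1

section padOne

variable {r : ℕ} {p : Fin r → ℕ}

theorem padOne_val (p : Fin r → ℕ) (i : Fin r) : padOne p i = p i :=
  Fin.val_injective.extend_apply p 1 i

theorem padOne_of_le (p : Fin r → ℕ) {i : ℕ} (hi : r ≤ i) : padOne p i = 1 :=
  Function.extend_apply' _ _ _ <| by rintro ⟨j, rfl⟩; exact j.isLt.not_ge hi

theorem padOne_pos (hp : ∀ i, 0 < p i) (i : ℕ) : 0 < padOne p i := by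
  rcases lt_or_ge i r with hi | hi
  · exact (hp ⟨i, hi⟩).trans_eq (padOne_val p ⟨i, hi⟩).symm
  · exact (padOne_of_le p hi).symm ▸ one_pos

theorem antitone_padOne (hp : ∀ i, 0 < p i) (hmono : Antitone p) : Antitone (padOne p) := by
  intro i j hij
  rcases lt_or_ge j r with hj | hj
  · have h : p ⟨j, hj⟩ ≤ p ⟨i, hij.trans_lt hj⟩ := hmono hij
    rwa [← padOne_val p ⟨j, hj⟩, ← padOne_val p ⟨i, _⟩] at h
  · exact (padOne_of_le p hj).trans_le (padOne_pos hp i)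

theorem prod_range_padOne (p : Fin r → ℕ) (j : Fin r) :
    ∏ i ∈ range j, padOne p i = ∏ i ∈ Iio j, p i := by
  rw [← Nat.Iio_eq_range, ← Fin.map_valEmbedding_Iio, prod_map]
  exact prod_congr rfl fun i _ ↦ padOne_val p i

theorem prod_range_add_padOne (p : Fin r → ℕ) (k : ℕ) :
    ∏ i ∈ range (r + k), padOne p i = ∏ i, p i := by
  rw [prod_range_add, prod_eq_one fun i _ ↦ padOne_of_le p (Nat.le_add_right r i), mul_one,
    prod_range]
  exact prod_congr rfl fun i _ ↦ padOne_val p i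

end padOne

/-- The sequence `p 0 ≥ ⋯ ≥ p (r - 1)` satisfies the conditions on the prime factors of an element
of the support `𝒟⁺(D)` of the upper-bound linear sieve of level `D`, except for primality. Indices
start at `0`, so the odd positions of the sieve condition are the even indices here. -/
structure IsUpperSieveFactors {r : ℕ} (p : Fin r → ℕ) (D : ℝ) : Prop where
  pos : ∀ i, 0 < p i
  antitone : Antitone p
  prod_mul_cube_le : ∀ j : Fin r, Even (j : ℕ) → (∏ i ∈ Iio j, (p i : ℝ)) * (p j : ℝ) ^ 3 ≤ D

namespace IsUpperSieveFactors

variable {r : ℕ} {p : Fin r → ℕ} {D A : ℝ}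

theorem sum_log_add_three_mul_log_le (hp : IsUpperSieveFactors p D) (j : Fin r)
    (hj : Even (j : ℕ)) :
    ∑ i ∈ range j, log (padOne p i) + 3 * log (padOne p j) ≤ log D := by
  have pos (i : ℕ) : (0 : ℝ) < padOne p i := Nat.cast_pos.2 (padOne_pos hp.pos i)
  have h := hp.prod_mul_cube_le j hj
  rw [← Nat.cast_prod, ← prod_range_padOne, Nat.cast_prod, ← padOne_val p j] at h
  have hprod : 0 < ∏ i ∈ range j, (padOne p i : ℝ) := prod_pos fun i _ ↦ pos i
  have hcube : 0 < (padOne p j : ℝ) ^ 3 := pow_pos (pos j) 3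
  calc _ = log ((∏ i ∈ range j, (padOne p i : ℝ)) * (padOne p j : ℝ) ^ 3) := by
        rw [log_mul hprod.ne' hcube.ne', log_prod fun i _ ↦ (pos i).ne', log_pow, Nat.cast_ofNat]
    _ ≤ log D := log_le_log (mul_pos hprod hcube) h

theorem isUpperSieveSeq_log (hp : IsUpperSieveFactors p D) (hD : 0 ≤ log D) :
    IsUpperSieveSeq (fun i ↦ log (padOne p i)) (log D) := by
  have nonneg (i : ℕ) : 0 ≤ log (padOne p i) := log_natCast_nonneg _
  have antitone : Antitone fun i ↦ log (padOne p i) := fun i j hij ↦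
    log_le_log (Nat.cast_pos.2 (padOne_pos hp.pos j))
      (Nat.cast_le.2 (antitone_padOne hp.pos hp.antitone hij))
  refine ⟨nonneg, antitone, fun k ↦ ?_⟩
  induction k with
  | zero =>
    rcases lt_or_ge 0 r with hr | hr
    · exact hp.sum_log_add_three_mul_log_le ⟨0, hr⟩ .zero
    · simpa [padOne_of_le p hr] using hD
  | succ k ih =>
    rcases lt_or_ge (2 * (k + 1)) r with hr | hr
    · exact hp.sum_log_add_three_mul_log_le ⟨_, hr⟩ (even_two_mul _)
    · have h := antitone (Nat.le_succ (2 * k))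
      have h' := nonneg (2 * k)
      rw [padOne_of_le p hr, Nat.cast_one, log_one, mul_add, mul_one, sum_range_succ,
        sum_range_succ]
      linarith

theorem exists_factorization (hp : IsUpperSieveFactors p D) (hD : 0 < D) (hA₁ : 1 ≤ A)
    (hA : A ≤ D ^ (2 / 3 : ℝ)) :
    ∃ d₁ d₂ d₃ : ℕ, 0 < d₁ ∧ 0 < d₂ ∧ 0 < d₃ ∧ d₁ * d₂ * d₃ = ∏ i, p i ∧
      (d₁ : ℝ) ≤ A ∧ (d₂ : ℝ) ≤ D ^ (4 / 9 : ℝ) ∧ (d₃ : ℝ) ≤ D ^ (2 / 3 : ℝ) / A ∧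
      (d₂ : ℝ) * d₃ ≤ D / A := by
  have hA₀ : 0 < A := one_pos.trans_le hA₁
  have hlogA₀ : 0 ≤ log A := log_nonneg hA₁
  have hlogA : log A ≤ 2 / 3 * log D := (log_le_log hA₀ hA).trans_eq (log_rpow hD _)
  obtain ⟨u, v, w, h, hu, hv, hw, hvw⟩ := (hp.isUpperSieveSeq_log (by linarith)).hasBalancedSplit
    hlogA₀ hlogA (Nat.le_add_left 4 r)
  obtain ⟨d₁, d₂, d₃, hd, h₁, h₂, h₃⟩ := h.exists_factorization (padOne_pos hp.pos)
  have pos {d : ℕ} {t : ℝ} (hdt : (d : ℝ) = exp t) : 0 < d := Nat.cast_pos.1 (hdt ▸ exp_pos t)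
  refine ⟨d₁, d₂, d₃, pos h₁, pos h₂, pos h₃, hd.trans (prod_range_add_padOne p 4), ?_, ?_, ?_, ?_⟩
  · rwa [h₁, ← le_log_iff_exp_le hA₀]
  · rwa [h₂, ← le_log_iff_exp_le (rpow_pos_of_pos hD _), log_rpow hD]
  · have hD' := rpow_pos_of_pos hD (2 / 3)
    rwa [h₃, ← le_log_iff_exp_le (div_pos hD' hA₀), log_div hD'.ne' hA₀.ne', log_rpow hD]
  · rwa [h₂, h₃, ← exp_add, ← le_log_iff_exp_le (div_pos hD hA₀), log_div hD.ne' hA₀.ne']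

end IsUpperSieveFactors

theorem fact_upper_linear_sieve_general (δ x N : ℝ) (hδ : 0 ≤ δ) (hx : 1 ≤ x) (hN1 : x ^ δ ≤ N)
    (hN2 : N ≤ x ^ (2 / 5 - 97 / 3 * δ)) (r : ℕ) (p : Fin r → ℕ)
    (hp : IsUpperSieveFactors p (x ^ (3 / 5 - 50 * δ))) :
    ∃ d₁ d₂ d₃ : ℕ, 0 < d₁ ∧ 0 < d₂ ∧ 0 < d₃ ∧ d₁ * d₂ * d₃ = ∏ i, p i ∧
      (d₁ : ℝ) ≤ N * x ^ (-δ) ∧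
      N ^ 2 * (d₂ : ℝ) * (d₃ : ℝ) ^ 2 ≤ x ^ (1 - δ) ∧
      N ^ 2 * (d₂ : ℝ) ^ 5 * (d₃ : ℝ) ^ 2 ≤ x ^ (2 - δ) := by
  have hx₀ : 0 < x := one_pos.trans_le hx
  have hN₀ : 0 < N := (rpow_pos_of_pos hx₀ δ).trans_le hN1
  have hA₁ : 1 ≤ N * x ^ (-δ) := by
    rwa [rpow_neg hx₀.le, ← div_eq_mul_inv, one_le_div (rpow_pos_of_pos hx₀ δ)]
  have hA : N * x ^ (-δ) ≤ (x ^ (3 / 5 - 50 * δ)) ^ (2 / 3 : ℝ) := by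
    calc N * x ^ (-δ) ≤ x ^ (2 / 5 - 97 / 3 * δ) * x ^ (-δ) := by gcongr
      _ = (x ^ (3 / 5 - 50 * δ)) ^ (2 / 3 : ℝ) := by
        rw [← rpow_add hx₀, ← rpow_mul hx₀.le]; ring_nf
  obtain ⟨d₁, d₂, d₃, hd₁, hd₂, hd₃, hd, h₁, h₂, h₃, h₂₃⟩ :=
    hp.exists_factorization (rpow_pos_of_pos hx₀ _) hA₁ hA
  have mul_div_cancel (t : ℝ) : N * (t / (N * x ^ (-δ))) = x ^ δ * t := by
    rw [rpow_neg hx₀.le]; field_simp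
  have h₂' : (d₂ : ℝ) ≤ x ^ (4 / 15 - 200 / 9 * δ) := by
    refine h₂.trans_eq ?_
    rw [← rpow_mul hx₀.le]; ring_nf
  have h₃' : N * d₃ ≤ x ^ (2 / 5 - 97 / 3 * δ) := by
    refine (mul_le_mul_of_nonneg_left h₃ hN₀.le).trans_eq ?_
    rw [mul_div_cancel, ← rpow_mul hx₀.le, ← rpow_add hx₀]; ring_nf
  have h₂₃' : N * (d₂ * d₃) ≤ x ^ (3 / 5 - 49 * δ) := by
    refine (mul_le_mul_of_nonneg_left h₂₃ hN₀.le).trans_eq ?_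
    rw [mul_div_cancel, ← rpow_add hx₀]; ring_nf
  refine ⟨d₁, d₂, d₃, hd₁, hd₂, hd₃, hd, h₁, ?_, ?_⟩
  · calc N ^ 2 * (d₂ : ℝ) * (d₃ : ℝ) ^ 2 = N * (d₂ * d₃) * (N * d₃) := by ring
      _ ≤ x ^ (3 / 5 - 49 * δ) * x ^ (2 / 5 - 97 / 3 * δ) := by gcongr
      _ = x ^ (1 - 244 / 3 * δ) := by rw [← rpow_add hx₀]; ring_nf
      _ ≤ x ^ (1 - δ) := rpow_le_rpow_of_exponent_le hx (by linarith)
  · calc N ^ 2 * (d₂ : ℝ) ^ 5 * (d₃ : ℝ) ^ 2 = (N * (d₂ * d₃)) ^ 2 * (d₂ : ℝ) ^ 3 := by ring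
      _ ≤ (x ^ (3 / 5 - 49 * δ)) ^ 2 * (x ^ (4 / 15 - 200 / 9 * δ)) ^ 3 := by gcongr
      _ = x ^ (2 - 494 / 3 * δ) := by
        rw [← rpow_mul_natCast hx₀.le, ← rpow_mul_natCast hx₀.le, ← rpow_add hx₀]; ring_nf
      _ ≤ x ^ (2 - δ) := rpow_le_rpow_of_exponent_le hx (by linarith)

/-- Factorization in the upper-bound linear sieve support: with `0 < δ < 10⁻⁵`,
`D = x^{3/5−50δ}`, `x^{2δ} ≤ N ≤ x^{1/3+δ}`, and `d = p₁⋯p_r` with primes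
`p₁ ≥ ⋯ ≥ p_r` satisfying `p₁⋯p_{j−1}p_j³ ≤ D` for all odd `j ≤ r`, there is a
factorization `d = d₁d₂d₃` with `d₁ ≤ N x^{−δ}`, `N²d₂d₃² ≤ x^{1−δ}`,
`N²d₂⁵d₃² ≤ x^{2−δ}`. -/
theorem fact_upper_linear_sieve (δ x N : ℝ) (hδ : 0 < δ) (hδ' : δ < 1 / 100000)
    (hx : 1 < x) (hN1 : x ^ (2 * δ) ≤ N) (hN2 : N ≤ x ^ ((1 : ℝ) / 3 + δ))
    (r : ℕ) (p : Fin r → ℕ) (hp : ∀ i, (p i).Prime)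
    (hmono : ∀ i j : Fin r, i ≤ j → p j ≤ p i)
    (hplus : ∀ j : Fin r, Odd ((j : ℕ) + 1) →
      ((∏ i ∈ Finset.univ.filter (· < j), p i : ℕ) : ℝ) * (p j : ℝ) ^ 3
        ≤ x ^ ((3 : ℝ) / 5 - 50 * δ)) :
    ∃ d₁ d₂ d₃ : ℕ, 0 < d₁ ∧ 0 < d₂ ∧ 0 < d₃ ∧ d₁ * d₂ * d₃ = ∏ i, p i ∧
      (d₁ : ℝ) ≤ N * x ^ (-δ) ∧
      N ^ 2 * (d₂ : ℝ) * (d₃ : ℝ) ^ 2 ≤ x ^ (1 - δ) ∧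
      N ^ 2 * (d₂ : ℝ) ^ 5 * (d₃ : ℝ) ^ 2 ≤ x ^ (2 - δ) := by
  refine fact_upper_linear_sieve_general δ x N hδ.le hx.le
    ((rpow_le_rpow_of_exponent_le hx.le (by linarith)).trans hN1)
    (hN2.trans (rpow_le_rpow_of_exponent_le hx.le (by linarith))) r p
    ⟨fun i ↦ (hp i).pos, fun i j ↦ hmono i j, fun j hj ↦ ?_⟩
  simpa [filter_gt_eq_Iio] using hplus j hj.add_one
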